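/- arXiv:1803.10156 — 3 statements merged into one kernel-verified Lean document; each statement's English description precedes it below -/
import Mathlib

section
/- Let r : ℝ → ℝ be differentiable at c with r′(c) ≠ 0. Then the Extended Newton transformed function g(y) = (y − c)·r(y)/(r(y) − r(c)) tends to r(c)/r′(c) as y → c with y ≠ c (i.e. along the punctured neighborhood filter at c). In particular, if additionally r(c) ≠ 0, this limit is nonzero, so the transformation does not introduce a spurious root at y = c. -/
open Topology Filter

/-- The Extended Newton transformed function tends to `r c / deriv r c` as `y → c`,
`y ≠ c`; in particular, if `r c ≠ 0` this limit is nonzero, so no spurious root is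
introduced at `y = c`. -/
theorem extendedNewton_no_spurious_root (r : ℝ → ℝ) (c : ℝ)
    (hr : DifferentiableAt ℝ r c) (hd : deriv r c ≠ 0) :
    Filter.Tendsto (fun y => (y - c) * r y / (r y - r c)) (𝓝[≠] c)
      (𝓝 (r c / deriv r c)) ∧
    (r c ≠ 0 → r c / deriv r c ≠ 0) := by
  refine ⟨?_, fun h => div_ne_zero h hd⟩
  have h1 := hasDerivAt_iff_tendsto_slope.mp hr.hasDerivAt
  have h2 : Filter.Tendsto r (𝓝[≠] c) (𝓝 (r c)) :=
    hr.continuousAt.tendsto.mono_left nhdsWithin_le_nhds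
  refine (h2.div h1 hd).congr fun y => ?_
  simp only [Pi.div_apply, slope_def_field]
  rw [div_div_eq_mul_div, mul_comm]
end

section
/- Let r : ℝ → ℝ, let c, x* ∈ ℝ with x* ≠ c, suppose r is differentiable at x*, r(x*) = 0, and r(c) ≠ 0. Then the Extended Newton transformed function g(y) = (y − c)·r(y)/(r(y) − r(c)) is differentiable at x* with g′(x*) = −(x* − c)·r′(x*)/r(c); in particular, if r′(x*) ≠ 0 (x* is a simple root of r), then g′(x*) ≠ 0, so x* is also a simple root of g. -/
/-- At a root `x* ≠ c` of `r` with `r c ≠ 0`, the Extended Newton transformed function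
`g y = (y - c) * r y / (r y - r c)` is differentiable with
`g'(x*) = -(x* - c) * r'(x*) / r c`; in particular simple roots of `r` are simple
roots of `g`. -/
theorem extendedNewton_simple_root (r : ℝ → ℝ) (c xs : ℝ) (hxc : xs ≠ c)
    (hr : DifferentiableAt ℝ r xs) (hroot : r xs = 0) (hc : r c ≠ 0) :
    DifferentiableAt ℝ (fun y => (y - c) * r y / (r y - r c)) xs ∧
    deriv (fun y => (y - c) * r y / (r y - r c)) xs
      = -(xs - c) * deriv r xs / r c ∧
    (deriv r xs ≠ 0 → deriv (fun y => (y - c) * r y / (r y - r c)) xs ≠ 0) := by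
  have hd : r xs - r c ≠ 0 := by rw [hroot, zero_sub]; exact neg_ne_zero.mpr hc
  have h : HasDerivAt (fun y => (y - c) * r y / (r y - r c))
      (-(xs - c) * deriv r xs / r c) xs := by
    have h1 : HasDerivAt (fun y => (y - c) * r y / (r y - r c)) _ xs :=
      (((hasDerivAt_id' xs).sub_const c).fun_mul hr.hasDerivAt).fun_div
        (hr.hasDerivAt.sub_const (r c)) hd
    refine h1.congr_deriv ?_
    rw [hroot]
    field_simp
    ring
  refine ⟨h.differentiableAt, h.deriv, fun h0 => ?_⟩
  rw [h.deriv]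
  exact div_ne_zero (mul_ne_zero (neg_ne_zero.mpr (sub_ne_zero.mpr hxc)) h0) hc
end

section
/- Let r : ℝ → ℝ be twice continuously differentiable at x (ContDiffAt ℝ 2 r x), with r′(x) ≠ 0 and 2·r′(x)² − r(x)·r″(x) ≠ 0. Then the Extended Newton step, viewed as a function of the parameter c, Δ(c) = −(x − c)·r(x)·(r(x) − r(c)) / (r(x)·(r(x) − r(c)) − (x − c)·r′(x)·r(c)), tends to the Corrected Newton (Halley) step −2·r(x)·r′(x)/(2·r′(x)² − r(x)·r″(x)) = −(r(x)/r′(x)) / (1 − r(x)·r″(x)/(2·r′(x)²)) as c → x with c ≠ x (along the punctured neighborhood filter at x). -/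
open Topology Filter

/-- As `c → x` (with `c ≠ x`), the Extended Newton step tends to the Corrected
Newton (Halley) step. -/
theorem extendedNewton_tendsto_correctedNewton (r : ℝ → ℝ) (x : ℝ)
    (hr : ContDiffAt ℝ 2 r x) (hd : deriv r x ≠ 0)
    (hden : 2 * (deriv r x) ^ 2 - r x * deriv (deriv r) x ≠ 0) :
    Filter.Tendsto
      (fun c => -((x - c) * r x * (r x - r c))
        / (r x * (r x - r c) - (x - c) * deriv r x * r c)) (𝓝[≠] x)
      (𝓝 (-(2 * r x * deriv r x) / (2 * (deriv r x) ^ 2 - r x * deriv (deriv r) x))) ∧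
    -(2 * r x * deriv r x) / (2 * (deriv r x) ^ 2 - r x * deriv (deriv r) x)
      = -(r x / deriv r x) / (1 - r x * deriv (deriv r) x / (2 * (deriv r x) ^ 2)) := by
  have hev : ∀ᶠ c in 𝓝 x, DifferentiableAt ℝ r c := by
    filter_upwards [hr.eventually (by simp)] with c hc
    exact hc.differentiableAt (by simp)
  have hdx : HasDerivAt r (deriv r x) x := hev.self_of_nhds.hasDerivAt
  have hd2 : HasDerivAt (deriv r) (deriv (deriv r) x) x := by
    have h1 : ContDiffAt ℝ 1 (deriv r) x := hr.derivWithin (by norm_num)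
    exact (h1.differentiableAt (by simp)).hasDerivAt
  have hS := hasDerivAt_iff_tendsto_slope.1 hdx
  have hS2 := hasDerivAt_iff_tendsto_slope.1 hd2
  have hne : ∀ᶠ c in 𝓝[≠] x, c - x ≠ 0 := by
    filter_upwards [self_mem_nhdsWithin] with c hc
    exact sub_ne_zero.2 hc
  have hq : Tendsto (fun c => (r c - r x - (c - x) * deriv r x) / (c - x) ^ 2) (𝓝[≠] x)
      (𝓝 (deriv (deriv r) x / 2)) := by
    apply HasDerivAt.lhopital_zero_nhdsNE (f' := fun c => deriv r c - deriv r x)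
      (g' := fun c => 2 * (c - x))
    · filter_upwards [hev.filter_mono nhdsWithin_le_nhds] with c hc
      have := (hc.hasDerivAt.sub_const (r x)).sub
        (((hasDerivAt_id c).sub_const x).mul_const (deriv r x))
      refine HasDerivAt.congr_deriv this ?_
      simp
    · refine Eventually.of_forall fun c => ?_
      have := ((hasDerivAt_id c).sub_const x).pow 2
      refine HasDerivAt.congr_deriv this ?_
      simp
    · filter_upwards [hne] with c hc
      simpa using hc
    · have h : ContinuousAt (fun c => r c - r x - (c - x) * deriv r x) x := by
        have := hdx.continuousAt
        fun_prop
      have h := h.tendsto.mono_left (nhdsWithin_le_nhds (s := {x}ᶜ))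
      simpa using h
    · have h : ContinuousAt (fun c : ℝ => (c - x) ^ 2) x := by fun_prop
      have h := h.tendsto.mono_left (nhdsWithin_le_nhds (s := {x}ᶜ))
      simpa using h
    · refine (hS2.div_const 2).congr' ?_
      filter_upwards [hne] with c hc
      rw [slope_def_field]
      field_simp
  have hden' : -(r x * (deriv (deriv r) x / 2)) + deriv r x * deriv r x ≠ 0 := by
    intro h
    apply hden
    linarith
  constructor
  · have hT := ((hS.const_mul (r x)).neg).div
      (((hq.const_mul (r x)).neg).add (hS.const_mul (deriv r x))) hden'
    have e : -(2 * r x * deriv r x) / (2 * (deriv r x) ^ 2 - r x * deriv (deriv r) x)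
        = -(r x * deriv r x) / (-(r x * (deriv (deriv r) x / 2)) + deriv r x * deriv r x) := by
      rw [div_eq_div_iff hden hden']
      ring
    rw [e]
    refine hT.congr' ?_
    filter_upwards [hne] with c hc
    have h2 : (c - x) ^ 2 ≠ 0 := pow_ne_zero 2 hc
    simp only [Pi.div_apply]
    rw [← mul_div_mul_left _ _ h2, slope_def_field]
    congr 1
    · field_simp
      ring
    · field_simp
      ring
  · have h3 : 1 - r x * deriv (deriv r) x / (2 * (deriv r x) ^ 2) ≠ 0 := by
      intro h
      apply hden
      field_simp at h
      linarith
    rw [div_eq_div_iff hden h3]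
    field_simp
end
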